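/- Let d ≥ 1, λ > 0, m ≥ 1, T ≥ 1, and A_1,…,A_T ∈ ℝ^d. Then Σ_{t=1}^T ‖A_t‖_{V_t(λ)^{-1}} · ( Σ_{s=max(1,t−m)}^{t−1} ‖A_s‖_{V_t(λ)^{-1}} ) ≤ m · Σ_{t=1}^T ‖A_t‖²_{V_t(λ)^{-1}}. -/

import Mathlib

/-!
Since `V_s ≤ V_t` in the Loewner order for `s ≤ t`, inversion reverses the order and
`‖A_s‖_{V_t⁻¹} ≤ ‖A_s‖_{V_s⁻¹}`. Writing `b_t = ‖A_t‖_{V_t⁻¹}`, it remains to bound `∑ b_t b_s` over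
the pairs with `t - m ≤ s < t`. By `2 b_t b_s ≤ b_t² + b_s²` this is a matter of counting: every
index is the later, respectively the earlier, member of at most `m` such pairs.
-/

open Finset Matrix

/-- `mnorm M x = √(xᵀ M x)`, the norm associated to a positive definite matrix `M`. -/
noncomputable def mnorm {d : ℕ} (M : Matrix (Fin d) (Fin d) ℝ) (x : Fin d → ℝ) : ℝ :=
  Real.sqrt (x ⬝ᵥ M.mulVec x)

/-- `Vmat A lam t = lam • I + ∑_{s=1}^{t-1} A_s A_sᵀ`. -/
noncomputable def Vmat {d : ℕ} (A : ℕ → Fin d → ℝ) (lam : ℝ) (t : ℕ) :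
    Matrix (Fin d) (Fin d) ℝ :=
  lam • (1 : Matrix (Fin d) (Fin d) ℝ) + ∑ s ∈ Finset.Ico 1 t, vecMulVec (A s) (A s)

open scoped MatrixOrder

open scoped ComplexOrder in
theorem inv_le_inv_of_posDef_of_le {𝕜 n : Type*} [RCLike 𝕜] [Fintype n] [DecidableEq n]
    {M N : Matrix n n 𝕜} (hM : M.PosDef) (hMN : M ≤ N) : N⁻¹ ≤ M⁻¹ := by
  have hN : N.PosDef := add_sub_cancel M N ▸ hM.add_posSemidef hMN
  let := hM.inv.isUnit.invertible
  let := hN.isUnit.invertible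
  -- `N - M` and `M⁻¹ - N⁻¹` are the two Schur complements of this block matrix.
  have hblock : (fromBlocks N 1 1ᴴ M⁻¹).PosSemidef := by
    rw [hM.inv.fromBlocks₂₂]
    simpa [← Matrix.le_iff, nonsing_inv_nonsing_inv _
      ((isUnit_iff_isUnit_det _).1 hM.isUnit)] using hMN
  rw [hN.fromBlocks₁₁] at hblock
  simpa [← Matrix.le_iff] using hblock

theorem mnorm_nonneg {d : ℕ} (M : Matrix (Fin d) (Fin d) ℝ) (x : Fin d → ℝ) : 0 ≤ mnorm M x :=
  Real.sqrt_nonneg _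

theorem mnorm_mono {d : ℕ} {M N : Matrix (Fin d) (Fin d) ℝ} (hMN : M ≤ N) (x : Fin d → ℝ) :
    mnorm M x ≤ mnorm N x := by
  have hquad := hMN.dotProduct_mulVec_nonneg x
  rw [star_trivial, sub_mulVec, dotProduct_sub, sub_nonneg] at hquad
  exact Real.sqrt_le_sqrt hquad

theorem Vmat_posDef {d : ℕ} (A : ℕ → Fin d → ℝ) {lam : ℝ} (hlam : 0 < lam) (t : ℕ) :
    (Vmat A lam t).PosDef :=
  (PosDef.one.smul hlam).add_posSemidef <|
    posSemidef_sum _ fun s _ ↦ (posSemidef_vecMulVec_self_star (A s) :)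

theorem Vmat_monotone {d : ℕ} (A : ℕ → Fin d → ℝ) (lam : ℝ) : Monotone (Vmat A lam) :=
  fun _ _ hst ↦ add_le_add_right
    (sum_le_sum_of_subset_of_nonneg (Ico_subset_Ico_right hst) fun r _ _ ↦
      (posSemidef_vecMulVec_self_star (A r)).nonneg) _

-- Schur test for the zero-one kernel `s ∈ W t`, with row and column sums at most `m`.
theorem sum_mul_sum_le_of_card_le {ι R : Type*} [DecidableEq ι]
    [CommRing R] [LinearOrder R] [IsStrictOrderedRing R] {I : Finset ι} {W : ι → Finset ι} {m : ℕ}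
    (hsub : ∀ t ∈ I, W t ⊆ I) (hcard : ∀ t ∈ I, #(W t) ≤ m)
    (hcover : ∀ s ∈ I, #{t ∈ I | s ∈ W t} ≤ m) (b : ι → R) :
    ∑ t ∈ I, b t * ∑ s ∈ W t, b s ≤ m * ∑ t ∈ I, b t ^ 2 := by
  have hrow : ∑ t ∈ I, ∑ _s ∈ W t, b t ^ 2 ≤ m * ∑ t ∈ I, b t ^ 2 := by
    simp only [sum_const, nsmul_eq_mul, mul_sum]
    gcongr with t ht
    exact hcard t ht
  have hcol : ∑ t ∈ I, ∑ s ∈ W t, b s ^ 2 ≤ m * ∑ s ∈ I, b s ^ 2 := by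
    rw [sum_comm' (t' := I) (s' := fun s ↦ {t ∈ I | s ∈ W t}) (by grind)]
    simp only [sum_const, nsmul_eq_mul, mul_sum]
    gcongr with s hs
    exact hcover s hs
  have hamgm : 2 * ∑ t ∈ I, b t * ∑ s ∈ W t, b s ≤
      ∑ t ∈ I, ∑ _s ∈ W t, b t ^ 2 + ∑ t ∈ I, ∑ s ∈ W t, b s ^ 2 := by
    simp only [mul_sum, ← sum_add_distrib, ← mul_assoc]
    gcongr
    exact two_mul_le_add_sq _ _
  linarith

theorem sum_mul_sum_window_le {R : Type*} [CommRing R] [LinearOrder R] [IsStrictOrderedRing R]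
    (b : ℕ → R) (m T : ℕ) :
    ∑ t ∈ Icc 1 T, b t * ∑ s ∈ Ico (max 1 (t - m)) t, b s ≤ m * ∑ t ∈ Icc 1 T, b t ^ 2 := by
  apply sum_mul_sum_le_of_card_le
  · intro t ht s hs
    simp only [mem_Icc, mem_Ico] at *
    omega
  · intro t _
    rw [Nat.card_Ico]
    omega
  · intro s _
    calc #{t ∈ Icc 1 T | s ∈ Ico (max 1 (t - m)) t}
      _ ≤ #(Ioc s (s + m)) := card_le_card fun t ht ↦ by
          simp only [mem_filter, mem_Ico, mem_Ioc] at *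
          omega
      _ = m := by simp

theorem window_cross_term_bound_general {d : ℕ} {V : ℕ → Matrix (Fin d) (Fin d) ℝ}
    (hpos : ∀ t, (V t).PosDef) (hmono : Monotone V) (m T : ℕ) (A : ℕ → Fin d → ℝ) :
    ∑ t ∈ Icc 1 T, mnorm (V t)⁻¹ (A t) * ∑ s ∈ Ico (max 1 (t - m)) t, mnorm (V t)⁻¹ (A s) ≤
      m * ∑ t ∈ Icc 1 T, mnorm (V t)⁻¹ (A t) ^ 2 :=
  calc
    _ ≤ ∑ t ∈ Icc 1 T, mnorm (V t)⁻¹ (A t) *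
          ∑ s ∈ Ico (max 1 (t - m)) t, mnorm (V s)⁻¹ (A s) := by
      gcongr with t _ s hs
      · exact mnorm_nonneg _ _
      · exact mnorm_mono (inv_le_inv_of_posDef_of_le (hpos s) (hmono (mem_Ico.1 hs).2.le)) (A s)
    _ ≤ _ := sum_mul_sum_window_le (fun t ↦ mnorm (V t)⁻¹ (A t)) m T

theorem window_cross_term_bound
    {d : ℕ} (hd : 1 ≤ d) (lam : ℝ) (hlam : 0 < lam)
    (m T : ℕ) (hm : 1 ≤ m) (hT : 1 ≤ T) (A : ℕ → Fin d → ℝ) :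
    ∑ t ∈ Finset.Icc 1 T, mnorm (Vmat A lam t)⁻¹ (A t) *
        (∑ s ∈ Finset.Ico (max 1 (t - m)) t, mnorm (Vmat A lam t)⁻¹ (A s)) ≤
      (m : ℝ) * ∑ t ∈ Finset.Icc 1 T, (mnorm (Vmat A lam t)⁻¹ (A t)) ^ 2 :=
  window_cross_term_bound_general (Vmat_posDef A hlam) (Vmat_monotone A lam) m T A
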